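/- arXiv:2404.05081 — 2 statements merged into one kernel-verified Lean document; each statement's English description precedes it below -/
import Mathlib

section
/- (Bochner's tube theorem.) Let n ≥ 1, let U ⊆ ℝⁿ be a connected open set, and let T(U) = { z ∈ ℂⁿ : (Re(z₁), …, Re(zₙ)) ∈ U }. If f : ℂⁿ → ℂ is holomorphic on T(U), then there exists a function F holomorphic on T(conv(U)), where conv(U) ⊆ ℝⁿ is the convex hull of U, such that F = f on T(U). -/
/-- The tube over a set `U ⊆ ℝⁿ`: all points of `ℂⁿ` whose vector of real parts lies in `U`. -/
def Tube {n : ℕ} (U : Set (Fin n → ℝ)) : Set (Fin n → ℂ) :=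
  {z | (fun i => (z i).re) ∈ U}

/-!
Fix a base point `a ∈ U` and convolve `f`, restricted to the slice `a + iℝⁿ` and cut off far out,
with a narrow Gaussian; the result is an entire function. By the Cauchy-Riemann equations, moving
the slice inside a convex part of `U` only produces an error supported where the cutoff varies,
and there the Gaussian is tiny. Since `U` is connected, `a + iℝⁿ` may be exchanged for the slice
through the point `z ∈ Tube U` of interest, where the convolutions are an approximate identity.
Hence `f` is a locally uniform limit of entire functions on `Tube U`.

By the definition of the hull, such a sequence also converges locally uniformly on the union `Ω`
of the hulls, with respect to entire functions, of the compact subsets of `Tube U`. This `Ω` is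
open, invariant under imaginary translations, and convex with respect to analytic discs, by the
maximum principle. If the real trace of `Ω` contains the segments `[a, b]` and `[b, c]`, discs
that are small perturbations of the flat triangle `abc` show that it contains `[a, c]`: so that
trace, which contains the connected set `U`, contains its convex hull.
-/

namespace Bochner

open Set Filter Topology Metric MeasureTheory

section EntireHull

variable {E F : Type*} [NormedAddCommGroup E] [NormedSpace ℂ E]
  [NormedAddCommGroup F] [NormedSpace ℂ F]

/-- The hull of `K` with respect to entire functions: the points where the modulus of every entire
function is bounded by its supremum over `K`. In `ℂⁿ` and for compact `K` this is the polynomially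
convex hull. -/
def entireHull (K : Set E) : Set E :=
  {z | ∀ P : E → ℂ, Differentiable ℂ P → ∀ M : ℝ, (∀ w ∈ K, ‖P w‖ ≤ M) → ‖P z‖ ≤ M}

/-- The union of the hulls, with respect to entire functions, of the compact subsets of `O`. -/
def compactEntireHull (O : Set E) : Set E :=
  {z | ∃ K ⊆ O, IsCompact K ∧ z ∈ entireHull K}

/-- The maximum principle for analytic discs as a convexity property of `W`: an entire curve that
maps the frontier of a bounded plane set into `W` maps its closure into `W`. -/
def DiscConvex (W : Set E) : Prop :=
  ∀ (φ : ℂ → E) (D : Set ℂ), Differentiable ℂ φ → Bornology.IsBounded D →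
    MapsTo φ (frontier D) W → MapsTo φ (closure D) W

lemma entireHull_mono {K L : Set E} (h : K ⊆ L) : entireHull K ⊆ entireHull L :=
  fun _ hz P hP M hM => hz P hP M fun w hw => hM w (h hw)

lemma norm_le_of_mem_entireHull {K : Set E} {P : E → F} {M : ℝ} (hP : Differentiable ℂ P)
    (hM : ∀ w ∈ K, ‖P w‖ ≤ M) {z : E} (hz : z ∈ entireHull K) : ‖P z‖ ≤ M := by
  obtain ⟨g, hg, hgz⟩ := exists_dual_vector'' ℂ (P z)
  have hgM : ∀ w ∈ K, ‖g (P w)‖ ≤ M := fun w hw =>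
    (g.le_of_opNorm_le hg _).trans ((one_mul _).trans_le (hM w hw))
  simpa [hgz] using hz (fun w => g (P w)) (g.differentiable.comp hP) M hgM

lemma add_mem_compactEntireHull {O : Set E} {v z : E} (hv : ∀ w ∈ O, w + v ∈ O)
    (hz : z ∈ compactEntireHull O) : z + v ∈ compactEntireHull O := by
  obtain ⟨K, hKO, hK, hzK⟩ := hz
  refine ⟨(· + v) '' K, image_subset_iff.2 fun w hw => hv w (hKO hw),
    hK.image (continuous_add_const v), fun P hP M hM => ?_⟩
  exact hzK (fun w => P (w + v)) (hP.comp (by fun_prop)) M fun w hw => hM _ (mem_image_of_mem _ hw)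

lemma subset_compactEntireHull (O : Set E) : O ⊆ compactEntireHull O := fun z hz =>
  ⟨{z}, singleton_subset_iff.2 hz, isCompact_singleton, fun _ _ _ hM => hM z rfl⟩

variable [ProperSpace E] {O : Set E}

lemma exists_ball_subset_entireHull (hO : IsOpen O) {z : E} (hz : z ∈ compactEntireHull O) :
    ∃ δ > 0, ∃ K ⊆ O, IsCompact K ∧ ball z δ ⊆ entireHull K := by
  obtain ⟨K, hKO, hK, hzK⟩ := hz
  obtain ⟨δ, hδ, hKδ⟩ := hK.exists_cthickening_subset_open hO hKO
  refine ⟨δ, hδ, cthickening δ K, hKδ, hK.cthickening, fun w hw P hP M hM => ?_⟩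
  have htranslate : ∀ u ∈ K, ‖P (u + (w - z))‖ ≤ M := fun u hu =>
    hM _ (mem_cthickening_of_dist_le _ u _ _ hu
      (by simpa [dist_eq_norm] using (mem_ball_iff_norm.1 hw).le))
  simpa using hzK (fun u => P (u + (w - z))) (hP.comp (by fun_prop)) M htranslate

lemma isOpen_compactEntireHull (hO : IsOpen O) : IsOpen (compactEntireHull O) :=
  Metric.isOpen_iff.2 fun _ hz =>
    let ⟨δ, hδ, K, hKO, hK, hball⟩ := exists_ball_subset_entireHull hO hz
    ⟨δ, hδ, fun _ hw => ⟨K, hKO, hK, hball hw⟩⟩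

lemma exists_isCompact_subset_entireHull (hO : IsOpen O) {L : Set E} (hL : IsCompact L)
    (hLO : L ⊆ compactEntireHull O) : ∃ K ⊆ O, IsCompact K ∧ L ⊆ entireHull K := by
  refine hL.induction_on (p := fun L => ∃ K ⊆ O, IsCompact K ∧ L ⊆ entireHull K) ?_ ?_ ?_ ?_
  · exact ⟨∅, empty_subset _, isCompact_empty, empty_subset _⟩
  · rintro s t hst ⟨K, hKO, hK, ht⟩
    exact ⟨K, hKO, hK, hst.trans ht⟩
  · rintro s t ⟨K, hKO, hK, hs⟩ ⟨K', hKO', hK', ht⟩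
    exact ⟨K ∪ K', union_subset hKO hKO', hK.union hK',
      union_subset (hs.trans (entireHull_mono subset_union_left))
        (ht.trans (entireHull_mono subset_union_right))⟩
  · intro z hz
    obtain ⟨δ, hδ, hK⟩ := exists_ball_subset_entireHull hO (hLO hz)
    exact ⟨ball z δ, mem_nhdsWithin_of_mem_nhds (ball_mem_nhds z hδ), hK⟩

lemma discConvex_compactEntireHull (hO : IsOpen O) : DiscConvex (compactEntireHull O) := by
  intro φ D hφ hD hfrontier ζ hζ
  have hcompact : IsCompact (frontier D) :=
    isCompact_of_isClosed_isBounded isClosed_frontier (hD.closure.subset frontier_subset_closure)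
  obtain ⟨K, hKO, hK, hφK⟩ := exists_isCompact_subset_entireHull hO
    (hcompact.image hφ.continuous) hfrontier.image_subset
  refine ⟨K, hKO, hK, fun P hP M hM => ?_⟩
  exact Complex.norm_le_of_forall_mem_frontier_norm_le hD (hP.comp hφ).diffContOnCl
    (fun ξ hξ => hφK (mem_image_of_mem φ hξ) P hP M hM) hζ

end EntireHull

section CauchyEstimates

variable {E F : Type*} [NormedAddCommGroup E] [NormedSpace ℂ E]
  [NormedAddCommGroup F] [NormedSpace ℂ F]

lemma norm_fderiv_le_of_norm_le_on_ball {h : E → F} {z : E} {δ M : ℝ} (hδ : 0 < δ)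
    (hh : DifferentiableOn ℂ h (ball z δ)) (hM : ∀ w ∈ ball z δ, ‖h w‖ ≤ M) :
    ‖fderiv ℂ h z‖ ≤ 2 * M / δ := by
  refine Complex.norm_fderiv_le_div_of_mapsTo_ball hh (fun w hw => ?_) hδ
  rw [mem_closedBall_iff_norm, two_mul]
  exact norm_sub_le_of_le (hM w hw) (hM z (mem_ball_self hδ))

lemma dist_fderiv_le_of_norm_le_on_ball {g : E → F} {z w : E} {δ M : ℝ} (hδ : 0 < δ)
    (hg : DifferentiableOn ℂ g (ball z (3 * δ))) (hM : ∀ ζ ∈ ball z (3 * δ), ‖g ζ‖ ≤ M)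
    (hw : w ∈ ball z δ) : dist (fderiv ℂ g w) (fderiv ℂ g z) ≤ 4 * M / δ ^ 2 * dist w z := by
  have hsub : ∀ ζ ∈ ball z δ, ball ζ δ ⊆ ball z (3 * δ) := fun ζ hζ =>
    ball_subset_ball' (by linarith [mem_ball.1 hζ])
  have hshift : ∀ ζ, ζ + (w - z) ∈ ball ζ δ := fun ζ => by simpa [dist_eq_norm] using hw
  have hlip : ∀ ζ ∈ ball z δ, ‖g (ζ + (w - z)) - g ζ‖ ≤ 2 * M / δ * dist w z := by
    intro ζ hζ
    have hmaps : MapsTo g (ball ζ δ) (closedBall (g ζ) (2 * M)) := fun ξ hξ => by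
      rw [mem_closedBall_iff_norm, two_mul]
      exact norm_sub_le_of_le (hM ξ (hsub ζ hζ hξ)) (hM ζ (hsub ζ hζ (mem_ball_self hδ)))
    simpa [dist_eq_norm] using Complex.dist_le_div_mul_dist_of_mapsTo_ball
      (hg.mono (hsub ζ hζ)) hmaps (hshift ζ)
  have hd : ∀ ζ ∈ ball z δ, DifferentiableAt ℂ g ζ := fun ζ hζ =>
    hg.differentiableAt (isOpen_ball.mem_nhds (hsub ζ hζ (mem_ball_self hδ)))
  have hd' : ∀ ζ ∈ ball z δ, DifferentiableAt ℂ (fun ζ => g (ζ + (w - z))) ζ := fun ζ hζ =>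
    (differentiableAt_comp_add_right _).2
      (hg.differentiableAt (isOpen_ball.mem_nhds (hsub ζ hζ (hshift ζ))))
  have hcauchy := norm_fderiv_le_of_norm_le_on_ball hδ
    (fun ζ hζ => ((hd' ζ hζ).sub (hd ζ hζ)).differentiableWithinAt) hlip
  rw [fderiv_sub (hd' z (mem_ball_self hδ)) (hd z (mem_ball_self hδ)), fderiv_comp_add_right,
    add_sub_cancel, ← dist_eq_norm] at hcauchy
  exact hcauchy.trans_eq (by ring)

lemma continuousOn_fderiv {O : Set E} (hO : IsOpen O) {g : E → F}
    (hg : DifferentiableOn ℂ g O) : ContinuousOn (fderiv ℂ g) O := by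
  refine fun z hz => ContinuousAt.continuousWithinAt ?_
  have hbdd : ∀ᶠ ζ in 𝓝 z, ‖g ζ‖ < ‖g z‖ + 1 :=
    (hg.continuousOn.continuousAt (hO.mem_nhds hz)).norm.eventually_lt_const (lt_add_one _)
  obtain ⟨r, hr, hball⟩ := Metric.eventually_nhds_iff_ball.1 ((hO.eventually_mem hz).and hbdd)
  obtain ⟨δ, hδ, rfl⟩ : ∃ δ > 0, r = 3 * δ := ⟨r / 3, by positivity, by ring⟩
  refine tendsto_iff_dist_tendsto_zero.2 (squeeze_zero' (.of_forall fun _ => dist_nonneg)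
    (eventually_of_mem (ball_mem_nhds z hδ) fun w hw => dist_fderiv_le_of_norm_le_on_ball hδ
      (hg.mono fun ζ hζ => (hball ζ hζ).1) (fun ζ hζ => (hball ζ hζ).2.le) hw) ?_)
  exact Continuous.tendsto' (by fun_prop) z 0 (by simp)

end CauchyEstimates

section LocallyUniformLimits

variable {E F : Type*} [NormedAddCommGroup E] [NormedAddCommGroup F]

lemma tendstoLocallyUniformlyOn_limUnder {X ι : Type*} [TopologicalSpace X]
    [LocallyCompactSpace X] [CompleteSpace F] {l : Filter ι} [l.NeBot] {P : ι → X → F} {O : Set X}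
    (hO : IsOpen O) (hP : ∀ L ⊆ O, IsCompact L → UniformCauchySeqOn P l L) :
    TendstoLocallyUniformlyOn P (fun z => limUnder l (P · z)) l O := by
  rw [tendstoLocallyUniformlyOn_iff_forall_isCompact hO]
  intro L hLO hL
  refine (hP L hLO hL).tendstoUniformlyOn_of_tendsto fun z hz => ?_
  exact ((hP L hLO hL).cauchy_map hz).le_nhds_lim

lemma exists_seq_tendstoLocallyUniformlyOn {X : Type*} [TopologicalSpace X] [T2Space X]
    [LocallyCompactSpace X] [SecondCountableTopology X] {O : Set X} (hO : IsOpen O)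
    {p : (X → F) → Prop} {f : X → F}
    (happrox : ∀ K ⊆ O, IsCompact K → ∀ ε > 0, ∃ P, p P ∧ ∀ z ∈ K, ‖P z - f z‖ ≤ ε) :
    ∃ P : ℕ → X → F, (∀ k, p (P k)) ∧ TendstoLocallyUniformlyOn P f atTop O := by
  have : LocallyCompactSpace O := hO.locallyCompactSpace
  let K := CompactExhaustion.choice O
  choose P hp hP using fun k : ℕ => happrox (Subtype.val '' K k) (Subtype.coe_image_subset O _)
    ((K.isCompact k).image continuous_subtype_val) (1 / ((k : ℝ) + 1)) (by positivity)
  refine ⟨P, hp, (tendstoLocallyUniformlyOn_iff_forall_isCompact hO).2 fun L hLO hL => ?_⟩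
  have hL' : IsCompact ((Subtype.val : O → X) ⁻¹' L) :=
    Subtype.isCompact_iff.2 (by rwa [Subtype.image_preimage_coe, inter_eq_right.2 hLO])
  obtain ⟨k₀, hk₀⟩ := K.exists_superset_of_isCompact hL'
  rw [Metric.tendstoUniformlyOn_iff]
  intro ε hε
  filter_upwards [eventually_ge_atTop k₀,
    tendsto_one_div_add_atTop_nhds_zero_nat.eventually_lt_const hε] with k hk hkε z hz
  rw [dist_comm, dist_eq_norm]
  exact (hP k z ⟨⟨z, hLO hz⟩, K.subset hk (hk₀ hz), rfl⟩).trans_lt hkε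

variable [NormedSpace ℂ E] [NormedSpace ℂ F]

lemma uniformCauchySeqOn_fderiv [ProperSpace E] {P : ℕ → E → F} {O : Set E} (hO : IsOpen O)
    (hd : ∀ k, DifferentiableOn ℂ (P k) O)
    (hP : ∀ L ⊆ O, IsCompact L → UniformCauchySeqOn P atTop L) {L : Set E} (hLO : L ⊆ O)
    (hL : IsCompact L) : UniformCauchySeqOn (fun k => fderiv ℂ (P k)) atTop L := by
  obtain ⟨δ, hδ, hLδ⟩ := hL.exists_cthickening_subset_open hO hLO
  rw [Metric.uniformCauchySeqOn_iff]
  intro ε hε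
  obtain ⟨N, hN⟩ := Metric.uniformCauchySeqOn_iff.1 (hP _ hLδ hL.cthickening) (ε * δ / 4)
    (by positivity)
  refine ⟨N, fun j hj k hk z hz => ?_⟩
  have hball : ball z δ ⊆ cthickening δ L := fun w hw =>
    mem_cthickening_of_dist_le _ _ _ _ hz (mem_ball.1 hw).le
  have hdiff : ∀ i, DifferentiableAt ℂ (P i) z := fun i =>
    (hd i).differentiableAt (hO.mem_nhds (hLO hz))
  have hcauchy : ‖fderiv ℂ (P j - P k) z‖ ≤ 2 * (ε * δ / 4) / δ :=
    norm_fderiv_le_of_norm_le_on_ball hδ (((hd j).sub (hd k)).mono (hball.trans hLδ)) fun w hw =>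
      (dist_eq_norm (P j w) (P k w)).symm.trans_le (hN j hj k hk w (hball hw)).le
  rw [dist_eq_norm, ← fderiv_sub (hdiff j) (hdiff k)]
  calc ‖fderiv ℂ (P j - P k) z‖ ≤ 2 * (ε * δ / 4) / δ := hcauchy
    _ = ε / 2 := by field_simp; norm_num
    _ < ε := half_lt_self hε

lemma differentiableOn_limUnder [ProperSpace E] [CompleteSpace F] {P : ℕ → E → F} {O : Set E}
    (hO : IsOpen O) (hd : ∀ k, DifferentiableOn ℂ (P k) O)
    (hP : ∀ L ⊆ O, IsCompact L → UniformCauchySeqOn P atTop L) :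
    DifferentiableOn ℂ (fun z => limUnder atTop (P · z)) O := fun _ hz =>
  (hasFDerivAt_of_tendstoLocallyUniformlyOn hO
    (tendstoLocallyUniformlyOn_limUnder hO fun _ => uniformCauchySeqOn_fderiv hO hd hP)
    (fun k _ hx => ((hd k).differentiableAt (hO.mem_nhds hx)).hasFDerivAt)
    (fun _ hx => (tendstoLocallyUniformlyOn_limUnder hO hP).tendsto_at hx)
    hz).differentiableAt.differentiableWithinAt

theorem exists_differentiableOn_compactEntireHull_eqOn [ProperSpace E] [CompleteSpace F]
    {O : Set E} (hO : IsOpen O) {P : ℕ → E → F} (hd : ∀ k, Differentiable ℂ (P k)) {f : E → F}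
    (hP : TendstoLocallyUniformlyOn P f atTop O) :
    ∃ G : E → F, DifferentiableOn ℂ G (compactEntireHull O) ∧ EqOn G f O := by
  have hcauchy : ∀ L ⊆ compactEntireHull O, IsCompact L → UniformCauchySeqOn P atTop L := by
    intro L hLO hL
    obtain ⟨K, hKO, hK, hLK⟩ := exists_isCompact_subset_entireHull hO hL hLO
    have hPK := ((tendstoLocallyUniformlyOn_iff_forall_isCompact hO).1 hP K hKO
      hK).uniformCauchySeqOn
    rw [Metric.uniformCauchySeqOn_iff] at hPK ⊢
    intro ε hε
    obtain ⟨N, hN⟩ := hPK (ε / 2) (half_pos hε)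
    refine ⟨N, fun j hj k hk z hz => ?_⟩
    rw [dist_eq_norm]
    exact (norm_le_of_mem_entireHull ((hd j).sub (hd k)) (fun w hw =>
      (dist_eq_norm (P j w) (P k w)).symm.trans_le (hN j hj k hk w hw).le) (hLK hz)).trans_lt
        (half_lt_self hε)
  refine ⟨_, differentiableOn_limUnder (isOpen_compactEntireHull hO)
    (fun k => (hd k).differentiableOn) hcauchy, fun z hz => ?_⟩
  exact (hP.tendsto_at hz).limUnder_eq

end LocallyUniformLimits

section Coordinates

variable {n : ℕ}

/-- The vector of real parts, as a real-linear map. -/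
noncomputable def rePart : (Fin n → ℂ) →L[ℝ] Fin n → ℝ :=
  .pi fun i => Complex.reCLM ∘L .proj i

/-- The vector of imaginary parts, as a real-linear map. -/
noncomputable def imPart : (Fin n → ℂ) →L[ℝ] Fin n → ℝ :=
  .pi fun i => Complex.imCLM ∘L .proj i

/-- The identification `(x, y) ↦ x + iy` of `ℝⁿ × ℝⁿ` with `ℂⁿ`. -/
noncomputable def ofReIm : (Fin n → ℝ) × (Fin n → ℝ) →L[ℝ] Fin n → ℂ :=
  .pi fun i => Complex.ofRealCLM ∘L .proj i ∘L .fst ℝ _ _ +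
    Complex.I • (Complex.ofRealCLM ∘L .proj i ∘L .snd ℝ _ _)

@[simp] lemma rePart_apply (z : Fin n → ℂ) (i : Fin n) : rePart z i = (z i).re := rfl

@[simp] lemma imPart_apply (z : Fin n → ℂ) (i : Fin n) : imPart z i = (z i).im := rfl

@[simp] lemma ofReIm_apply (p : (Fin n → ℝ) × (Fin n → ℝ)) (i : Fin n) :
    ofReIm p i = p.1 i + Complex.I * p.2 i := rfl

@[simp] lemma rePart_ofReIm (p : (Fin n → ℝ) × (Fin n → ℝ)) : rePart (ofReIm p) = p.1 := by
  ext i; simp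

@[simp] lemma imPart_ofReIm (p : (Fin n → ℝ) × (Fin n → ℝ)) : imPart (ofReIm p) = p.2 := by
  ext i; simp

@[simp] lemma ofReIm_rePart_imPart (z : Fin n → ℂ) : ofReIm (rePart z, imPart z) = z := by
  ext i; apply Complex.ext <;> simp

lemma mem_tube {U : Set (Fin n → ℝ)} {z : Fin n → ℂ} : z ∈ Tube U ↔ rePart z ∈ U := Iff.rfl

lemma isOpen_tube {U : Set (Fin n → ℝ)} (hU : IsOpen U) : IsOpen (Tube U) :=
  hU.preimage rePart.continuous

lemma norm_rePart_le (z : Fin n → ℂ) : ‖rePart z‖ ≤ ‖z‖ :=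
  pi_norm_le_iff_of_nonneg (norm_nonneg z) |>.2 fun i =>
    (Complex.abs_re_le_norm (z i)).trans (norm_le_pi_norm z i)

lemma norm_imPart_le (z : Fin n → ℂ) : ‖imPart z‖ ≤ ‖z‖ :=
  pi_norm_le_iff_of_nonneg (norm_nonneg z) |>.2 fun i =>
    (Complex.abs_im_le_norm (z i)).trans (norm_le_pi_norm z i)

lemma tube_section_eq {W : Set (Fin n → ℂ)} (hW : ∀ w ∈ W, ∀ y, w + ofReIm (0, y) ∈ W) :
    Tube {x | ofReIm (x, 0) ∈ W} = W := by
  ext z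
  have hsplit : ∀ y, ofReIm (rePart z, y) + ofReIm (0, imPart z - y) = z := fun y => by
    rw [← map_add]; simp
  have hsplit' : z + ofReIm (0, -imPart z) = ofReIm (rePart z, 0) := by
    conv_lhs => rw [← ofReIm_rePart_imPart z, ← map_add]
    simp
  refine ⟨fun h => hsplit 0 ▸ hW _ h _, fun h => ?_⟩
  rw [mem_tube, mem_ofPred_eq, ← hsplit']
  exact hW z h _

end Coordinates

section Convexity

variable {n : ℕ} {S : Set (Fin n → ℝ)}

/-- The entire function `1 - ε (1 - v²)`, equal to `1` at `±1`, slightly below `1` on `(-1, 1)` and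
with real part tending to `-∞` along vertical lines. -/
noncomputable def bend (ε : ℝ) (v : ℂ) : ℂ := 1 - ε * (1 - v ^ 2)

/-- The plane domain over which `bentCurve` fills the pair of segments from `b` to `a` and `c`. -/
noncomputable def bendDomain (ε : ℝ) : Set ℂ := {v | |v.re| < 1 ∧ |v.re| < (bend ε v).re}

/-- An entire curve whose real part runs over the segments `[b, a]` and `[b, c]` on the frontier
of `bendDomain ε`, and close to the segment `[c, a]` on the interval `(-1, 1)`. -/
noncomputable def bentCurve (ε : ℝ) (a b c : Fin n → ℝ) (v : ℂ) (i : Fin n) : ℂ :=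
  b i + (bend ε v + v) / 2 * (a i - b i) + (bend ε v - v) / 2 * (c i - b i)

lemma bend_re (ε : ℝ) (v : ℂ) : (bend ε v).re = 1 - ε * (1 - v.re ^ 2 + v.im ^ 2) := by
  simp only [bend, Complex.sub_re, Complex.one_re, Complex.re_ofReal_mul, pow_two v,
    Complex.mul_re v v]
  ring

lemma differentiable_bentCurve (ε : ℝ) (a b c : Fin n → ℝ) :
    Differentiable ℂ (bentCurve ε a b c) := by
  unfold bentCurve bend
  fun_prop

lemma rePart_bentCurve (ε : ℝ) (a b c : Fin n → ℝ) (v : ℂ) :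
    rePart (bentCurve ε a b c v) =
      b + (((bend ε v).re + v.re) / 2) • (a - b) + (((bend ε v).re - v.re) / 2) • (c - b) := by
  ext i
  simp [bentCurve]

lemma isBounded_bendDomain {ε : ℝ} (hε : 0 < ε) : Bornology.IsBounded (bendDomain ε) := by
  refine (((isBounded_Icc (-1 : ℝ) 1).reProdIm
    (isBounded_Icc (-(1 + ε⁻¹)) (1 + ε⁻¹))).subset fun v hv => ?_)
  obtain ⟨hre, hbend⟩ := hv
  rw [bend_re] at hbend
  have hre_sq : v.re ^ 2 ≤ 1 := (sq_le_one_iff_abs_le_one _).2 hre.le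
  have him : ε * v.im ^ 2 ≤ 1 := by nlinarith [abs_nonneg v.re]
  have him_sq : v.im ^ 2 ≤ (1 + ε⁻¹) ^ 2 := by
    have : v.im ^ 2 ≤ ε⁻¹ := by rwa [← one_div, le_div_iff₀' hε]
    nlinarith [inv_pos.2 hε]
  exact ⟨abs_le.1 hre.le, abs_le_of_sq_le_sq' him_sq (by positivity)⟩

lemma abs_re_eq_of_mem_frontier_bendDomain {ε : ℝ} (hε : 0 < ε) {v : ℂ}
    (hv : v ∈ frontier (bendDomain ε)) : |v.re| ≤ 1 ∧ |v.re| = (bend ε v).re := by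
  have hbend : Continuous fun v => (bend ε v).re := by simp only [bend_re]; fun_prop
  have hclosed : IsClosed {v : ℂ | |v.re| ≤ 1 ∧ |v.re| ≤ (bend ε v).re} :=
    (isClosed_le Complex.continuous_re.abs continuous_const).inter
      (isClosed_le Complex.continuous_re.abs hbend)
  have hopen : IsOpen (bendDomain ε) :=
    (isOpen_lt Complex.continuous_re.abs continuous_const).inter
      (isOpen_lt Complex.continuous_re.abs hbend)
  have hsub : bendDomain ε ⊆ {v : ℂ | |v.re| ≤ 1 ∧ |v.re| ≤ (bend ε v).re} := fun _ h =>
    ⟨h.1.le, h.2.le⟩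
  obtain ⟨hle, hle'⟩ := closure_minimal hsub hclosed (frontier_subset_closure hv)
  refine ⟨hle, hle'.antisymm (not_lt.1 fun hlt => ?_)⟩
  obtain hlt' | heq := hle.lt_or_eq
  · exact (hopen.frontier_eq.subset hv).2 ⟨hlt', hlt⟩
  · rw [bend_re, ← sq_abs v.re, heq] at hlt
    nlinarith [sq_nonneg v.im]

lemma rePart_bentCurve_mem_segment {ε : ℝ} (hε : 0 < ε) (a b c : Fin n → ℝ) {v : ℂ}
    (hv : v ∈ frontier (bendDomain ε)) :
    rePart (bentCurve ε a b c v) ∈ segment ℝ b a ∪ segment ℝ b c := by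
  obtain ⟨hle, heq⟩ := abs_re_eq_of_mem_frontier_bendDomain hε hv
  rw [rePart_bentCurve, ← heq]
  rcases le_total 0 v.re with hv0 | hv0
  · rw [abs_of_nonneg hv0] at hle ⊢
    left
    rw [segment_eq_image']
    exact ⟨v.re, ⟨hv0, hle⟩, by module⟩
  · rw [abs_of_nonpos hv0] at hle ⊢
    right
    rw [segment_eq_image']
    exact ⟨-v.re, ⟨by linarith, hle⟩, by module⟩

lemma rePart_bentCurve_mem (hS : DiscConvex (Tube S)) {ε : ℝ} (hε : 0 < ε) (hε' : ε ≤ 1 / 2)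
    {a b c : Fin n → ℝ} (hab : segment ℝ b a ⊆ S) (hbc : segment ℝ b c ⊆ S) {p : ℝ}
    (hp : |p| < 1) : rePart (bentCurve ε a b c p) ∈ S := by
  refine hS _ _ (differentiable_bentCurve ε a b c) (isBounded_bendDomain hε)
    (fun v hv => union_subset hab hbc (rePart_bentCurve_mem_segment hε a b c hv))
    (subset_closure ⟨by simpa using hp, ?_⟩)
  rw [bend_re, Complex.ofReal_re, Complex.ofReal_im, ← sq_abs p]
  have hgap : 0 < (1 - |p|) * (1 - ε * (1 + |p|)) :=
    mul_pos (by linarith) (by nlinarith [abs_nonneg p])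
  linarith

lemma segment_subset_of_discConvex (hSo : IsOpen S) (hS : DiscConvex (Tube S))
    {a b c : Fin n → ℝ} (hab : segment ℝ b a ⊆ S) (hbc : segment ℝ b c ⊆ S) :
    segment ℝ a c ⊆ S := by
  rw [← insert_endpoints_openSegment]
  refine insert_subset (hab (right_mem_segment ..))
    (insert_subset (hbc (right_mem_segment ..)) ?_)
  rintro _ ⟨s, t, hs, ht, hst, rfl⟩
  have hcompact : ∀ x y : Fin n → ℝ, IsCompact (segment ℝ x y) := fun x y =>
    convexHull_pair (𝕜 := ℝ) x y ▸ (toFinite {x, y}).isCompact_convexHull ℝ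
  obtain ⟨δ, hδ, hthick⟩ := ((hcompact b a).union (hcompact b c)).exists_thickening_subset_open hSo
    (union_subset hab hbc)
  -- `bentCurve` misses the point `s a + t c` by `η ε`, so it is applied to a translated triangle.
  let η : ℝ → Fin n → ℝ := fun ε => (ε * (1 - (s - t) ^ 2) / 2) • (a + c - (2 : ℝ) • b)
  have hη : Tendsto η (𝓝[>] 0) (𝓝 0) :=
    (Continuous.tendsto' (by fun_prop) 0 0 (by simp [η])).mono_left nhdsWithin_le_nhds
  obtain ⟨ε, hεη, hε0, hε⟩ := ((hη.eventually (ball_mem_nhds 0 hδ)).and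
    (Ioc_mem_nhdsGT (by norm_num : (0 : ℝ) < 1 / 2))).exists
  have htranslate : ∀ x ∈ segment ℝ b a ∪ segment ℝ b c, η ε + x ∈ S := fun x hx =>
    hthick (mem_thickening_iff.2 ⟨x, hx, by simpa using hεη⟩)
  have hmem := rePart_bentCurve_mem hS hε0 hε (a := η ε + a) (b := η ε + b) (c := η ε + c)
    (p := s - t) ?_ ?_ (abs_lt.2 ⟨by linarith, by linarith⟩)
  · convert hmem using 1
    rw [rePart_bentCurve, bend_re, Complex.ofReal_re, Complex.ofReal_im]
    obtain rfl : t = 1 - s := by linarith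
    simp only [η]
    module
  · rw [← segment_translate_image, image_subset_iff]
    exact fun x hx => htranslate x (.inl hx)
  · rw [← segment_translate_image, image_subset_iff]
    exact fun x hx => htranslate x (.inr hx)

lemma segment_subset_of_isPreconnected (hSo : IsOpen S) (hS : DiscConvex (Tube S))
    {U : Set (Fin n → ℝ)} (hU : IsOpen U) (hc : IsPreconnected U) (hUS : U ⊆ S)
    {x y : Fin n → ℝ} (hx : x ∈ U) (hy : y ∈ U) : segment ℝ x y ⊆ S := by
  refine hc.induction₂ (fun x y => segment ℝ x y ⊆ S) (fun x hx => ?_) ?_ ?_ hx hy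
  · obtain ⟨δ, hδ, hball⟩ := Metric.isOpen_iff.1 hU x hx
    filter_upwards [mem_nhdsWithin_of_mem_nhds (ball_mem_nhds x hδ)] with y hy
    exact ((convex_ball x δ).segment_subset (mem_ball_self hδ) hy).trans (hball.trans hUS)
  · intro x y z _ _ _ hxy hyz
    exact segment_subset_of_discConvex hSo hS (segment_symm ℝ x y ▸ hxy) hyz
  · intro x y _ _ hxy
    rwa [segment_symm]

lemma convexHull_subset_of_discConvex (hSo : IsOpen S) (hS : DiscConvex (Tube S))
    {U : Set (Fin n → ℝ)} (hU : IsOpen U) (hc : IsPreconnected U) (hUS : U ⊆ S) :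
    convexHull ℝ U ⊆ S := by
  rcases U.eq_empty_or_nonempty with rfl | ⟨x₀, hx₀⟩
  · simp
  have hstar : Convex ℝ {x | segment ℝ x₀ x ⊆ S} := by
    refine convex_iff_segment_subset.2 fun x (hx : segment ℝ x₀ x ⊆ S) y hy z hz => ?_
    rw [segment_symm] at hx
    have hxy : segment ℝ x y ⊆ S := segment_subset_of_discConvex hSo hS
      (segment_symm ℝ x x₀ ▸ hx) hy
    have hxz : segment ℝ x z ⊆ S := ((convex_segment x y).segment_subset
      (left_mem_segment ℝ x y) hz).trans hxy
    exact segment_subset_of_discConvex hSo hS hx hxz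
  exact (convexHull_min (fun x hx => segment_subset_of_isPreconnected hSo hS hU hc hUS hx₀ hx)
    hstar).trans fun x hx => hx (right_mem_segment ℝ x₀ x)

theorem tube_convexHull_subset_compactEntireHull {U : Set (Fin n → ℝ)} (hU : IsOpen U)
    (hc : IsPreconnected U) : Tube (convexHull ℝ U) ⊆ compactEntireHull (Tube U) := by
  have htube : Tube {x | ofReIm (x, 0) ∈ compactEntireHull (Tube U)} =
      compactEntireHull (Tube U) :=
    tube_section_eq fun w hw y => add_mem_compactEntireHull (fun u hu => by
      simpa [mem_tube] using hu) hw
  have hopen : IsOpen {x | ofReIm (x, 0) ∈ compactEntireHull (Tube U)} :=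
    (isOpen_compactEntireHull (isOpen_tube hU)).preimage
      (f := fun x => ofReIm (x, 0)) (by fun_prop)
  have hhull : convexHull ℝ U ⊆ {x | ofReIm (x, 0) ∈ compactEntireHull (Tube U)} :=
    convexHull_subset_of_discConvex hopen
      (htube.symm ▸ discConvex_compactEntireHull (isOpen_tube hU)) hU hc fun x hx =>
        subset_compactEntireHull _ (by simpa [mem_tube] using hx)
  exact fun z hz => htube ▸ hhull hz

end Convexity

section ParametricIntegral

variable {𝕜 α H V : Type*} [RCLike 𝕜] [TopologicalSpace α] [MeasurableSpace α]
  [OpensMeasurableSpace α] {μ : Measure α} [IsFiniteMeasureOnCompacts μ] [NormedAddCommGroup H]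
  [NormedAddCommGroup V] [NormedSpace ℝ V] {χ : α → ℝ}

lemma integrable_smul_of_hasCompactSupport (hχ : Continuous χ) (hχc : HasCompactSupport χ)
    {G : α → V} (hG : Continuous G) : Integrable (fun s => χ s • G s) μ :=
  (hχ.smul hG).integrable_of_hasCompactSupport hχc.smul_right

lemma hasFDerivAt_integral_smul [NormedSpace 𝕜 H] [ProperSpace H] [NormedSpace 𝕜 V]
    [SMulCommClass 𝕜 ℝ V] {O : Set H} (hO : IsOpen O) {G : H → α → V} {G' : H → α → H →L[𝕜] V}
    (hG : ContinuousOn (fun p : H × α => G p.1 p.2) (O ×ˢ univ))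
    (hG' : ContinuousOn (fun p : H × α => G' p.1 p.2) (O ×ˢ univ))
    (hd : ∀ x ∈ O, ∀ s, HasFDerivAt (G · s) (G' x s) x)
    (hχ : Continuous χ) (hχc : HasCompactSupport χ) {x₀ : H} (hx₀ : x₀ ∈ O) :
    HasFDerivAt (fun x => ∫ s, χ s • G x s ∂μ) (∫ s, χ s • G' x₀ s ∂μ) x₀ := by
  obtain ⟨δ, hδ, hsub⟩ := nhds_basis_closedBall.mem_iff.1 (hO.mem_nhds hx₀)
  obtain ⟨C, hC⟩ := ((isCompact_closedBall x₀ δ).prod hχc).exists_bound_of_continuousOn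
    (hG'.mono (prod_mono hsub (subset_univ _)))
  have hint : ∀ x ∈ O, Integrable (fun s => χ s • G x s) μ := fun x hx =>
    integrable_smul_of_hasCompactSupport hχ hχc
      (hG.comp_continuous (f := fun s => (x, s)) (by fun_prop) fun s => ⟨hx, mem_univ s⟩)
  have hint' : Integrable (fun s => χ s • G' x₀ s) μ :=
    integrable_smul_of_hasCompactSupport hχ hχc
      (hG'.comp_continuous (f := fun s => (x₀, s)) (by fun_prop) fun s => ⟨hx₀, mem_univ s⟩)
  refine hasFDerivAt_integral_of_dominated_of_fderiv_le (bound := fun s => ‖χ s‖ * C)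
    (F' := fun x s => χ s • G' x s) (closedBall_mem_nhds _ hδ)
    (eventually_of_mem (hO.mem_nhds hx₀) fun x hx => (hint x hx).aestronglyMeasurable)
    (hint x₀ hx₀) hint'.aestronglyMeasurable (.of_forall fun s x hx => ?_)
    ((hχ.norm.integrable_of_hasCompactSupport hχc.norm).mul_const C)
    (.of_forall fun s x hx => (hd x (hsub hx) s).const_smul (χ s))
  rw [norm_smul]
  by_cases hs : s ∈ tsupport χ
  · exact mul_le_mul_of_nonneg_left (hC (x, s) ⟨hx, hs⟩) (norm_nonneg _)
  · simp [image_eq_zero_of_notMem_tsupport hs]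

lemma differentiable_integral_smul_comp_sub [NormedSpace ℂ H] [ProperSpace H] [NormedSpace ℂ V]
    (hχ : Continuous χ) (hχc : HasCompactSupport χ) {k : H → ℂ} (hk : Differentiable ℂ k)
    {w : α → H} (hw : Continuous w) {g : α → V} (hg : Continuous g) :
    Differentiable ℂ fun z => ∫ s, χ s • (k (z - w s) • g s) ∂μ := fun z => by
  have hk' : Continuous (fderiv ℂ k) :=
    continuousOn_univ.1 (continuousOn_fderiv isOpen_univ hk.differentiableOn)
  have hG : Continuous fun p : H × α => k (p.1 - w p.2) • g p.2 :=
    (hk.continuous.comp (by fun_prop)).smul (by fun_prop)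
  have hG' : Continuous fun p : H × α => (fderiv ℂ k (p.1 - w p.2)).smulRight (g p.2) :=
    ((ContinuousLinearMap.smulRightL ℂ H V).continuous.comp
      (hk'.comp (by fun_prop : Continuous fun p : H × α => p.1 - w p.2))).clm_apply (by fun_prop)
  refine (hasFDerivAt_integral_smul (G' := fun z s => (fderiv ℂ k (z - w s)).smulRight (g s))
    isOpen_univ hG.continuousOn hG'.continuousOn (fun z _ s => ?_) hχ hχc
    (mem_univ z)).differentiableAt
  exact ((hk _).hasFDerivAt.comp z (hasFDerivAt_sub_const (w s))).smul_const (g s)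

end ParametricIntegral

section Slices

variable {n : ℕ} {V : Type*} [NormedAddCommGroup V] {U : Set (Fin n → ℝ)} {χ : (Fin n → ℝ) → ℝ}

lemma ofReIm_mem_tube {x : Fin n → ℝ} (hx : x ∈ U) (s : Fin n → ℝ) : ofReIm (x, s) ∈ Tube U := by
  simpa [mem_tube] using hx

lemma continuousOn_slices {W : Type*} [TopologicalSpace W] {g : (Fin n → ℂ) → W}
    (hg : ContinuousOn g (Tube U)) :
    ContinuousOn (fun p : (Fin n → ℝ) × (Fin n → ℝ) => g (ofReIm (p.1, p.2))) (U ×ˢ univ) :=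
  hg.comp ofReIm.continuous.continuousOn fun p hp => ofReIm_mem_tube hp.1 p.2

lemma continuous_slice {W : Type*} [TopologicalSpace W] {g : (Fin n → ℂ) → W}
    (hg : ContinuousOn g (Tube U)) {x : Fin n → ℝ} (hx : x ∈ U) :
    Continuous fun s => g (ofReIm (x, s)) :=
  hg.comp_continuous (by fun_prop) (ofReIm_mem_tube hx)

variable [NormedSpace ℂ V] {g : (Fin n → ℂ) → V}

lemma hasFDerivAt_comp_ofReIm (hU : IsOpen U) (hg : DifferentiableOn ℂ g (Tube U))
    {x : Fin n → ℝ} (hx : x ∈ U) (s : Fin n → ℝ) :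
    HasFDerivAt (fun p => g (ofReIm p))
      ((fderiv ℂ g (ofReIm (x, s))).restrictScalars ℝ ∘L ofReIm) (x, s) :=
  ((hg.differentiableAt ((isOpen_tube hU).mem_nhds (ofReIm_mem_tube hx s))).hasFDerivAt
    |>.restrictScalars ℝ).comp (x, s) ofReIm.hasFDerivAt

lemma hasFDerivAt_integral_slice (hU : IsOpen U) (hg : DifferentiableOn ℂ g (Tube U))
    (hχ : Continuous χ) (hχc : HasCompactSupport χ) {x : Fin n → ℝ} (hx : x ∈ U) :
    HasFDerivAt (fun x => ∫ s, χ s • g (ofReIm (x, s)))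
      (∫ s, χ s • (((fderiv ℂ g (ofReIm (x, s))).restrictScalars ℝ ∘L ofReIm) ∘L .inl ℝ _ _))
      x := by
  refine hasFDerivAt_integral_smul (G' := fun x s =>
      ((fderiv ℂ g (ofReIm (x, s))).restrictScalars ℝ ∘L ofReIm) ∘L .inl ℝ _ _)
    hU (continuousOn_slices hg.continuousOn)
    (((ContinuousLinearMap.restrictScalarsL ℂ _ V ℝ ℝ).continuous.comp_continuousOn
      (continuousOn_slices (continuousOn_fderiv (isOpen_tube hU) hg))).clm_comp
        continuousOn_const |>.clm_comp continuousOn_const) (fun x hx s => ?_) hχ hχc hx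
  exact (hasFDerivAt_comp_ofReIm hU hg hx s).comp (f := fun e => (e, s)) x
    (hasFDerivAt_prodMk_left x s)

-- The Cauchy-Riemann equations turn a derivative across the slices into `I` times one along them.
lemma integral_smul_fderiv_slice (hU : IsOpen U) (hg : DifferentiableOn ℂ g (Tube U))
    (hχ : ContDiff ℝ 1 χ) (hχc : HasCompactSupport χ) {x : Fin n → ℝ} (hx : x ∈ U)
    (v : Fin n → ℝ) :
    ∫ s, χ s • fderiv ℂ g (ofReIm (x, s)) (ofReIm (v, 0)) =
      Complex.I • ∫ s, fderiv ℝ χ s v • g (ofReIm (x, s)) := by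
  have hderiv : ∀ s, HasFDerivAt (fun s => g (ofReIm (x, s)))
      (((fderiv ℂ g (ofReIm (x, s))).restrictScalars ℝ ∘L ofReIm) ∘L .inr ℝ _ _) s := fun s =>
    (hasFDerivAt_comp_ofReIm hU hg hx s).comp s (hasFDerivAt_prodMk_right x s)
  have hrotate : ofReIm (0, v) = Complex.I • ofReIm (v, 0) := by ext i; simp
  have hcauchyRiemann : ∀ s, fderiv ℝ (fun s => g (ofReIm (x, s))) s v =
      Complex.I • fderiv ℂ g (ofReIm (x, s)) (ofReIm (v, 0)) := fun s => by
    rw [(hderiv s).fderiv, ← map_smul, ← hrotate]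
    rfl
  have hgx := continuous_slice hg.continuousOn hx
  have hDgx : Continuous fun s => Complex.I • fderiv ℂ g (ofReIm (x, s)) (ofReIm (v, 0)) :=
    ((continuous_slice (continuousOn_fderiv (isOpen_tube hU) hg) hx).clm_apply
      continuous_const).const_smul _
  have hparts := integral_smul_fderiv_eq_neg_fderiv_smul_of_integrable (μ := volume) (f := χ)
    (g := fun s => g (ofReIm (x, s))) (v := v)
    (integrable_smul_of_hasCompactSupport
      ((hχ.continuous_fderiv one_ne_zero).clm_apply continuous_const) (hχc.fderiv_apply ℝ v) hgx)
    (by simpa only [hcauchyRiemann] using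
      integrable_smul_of_hasCompactSupport hχ.continuous hχc hDgx)
    (integrable_smul_of_hasCompactSupport hχ.continuous hχc hgx)
    (fun s _ => hχ.differentiable one_ne_zero s) (fun s _ => (hderiv s).differentiableAt)
  simp only [hcauchyRiemann, smul_comm _ Complex.I, integral_smul] at hparts
  rw [← neg_eq_iff_eq_neg.2 hparts, smul_neg, smul_smul, Complex.I_mul_I, neg_one_smul, neg_neg]

lemma norm_integral_slice_sub_le [CompleteSpace V] (hU : IsOpen U)
    (hg : DifferentiableOn ℂ g (Tube U))
    (hχ : ContDiff ℝ 1 χ) (hχc : HasCompactSupport χ) {C : Set (Fin n → ℝ)} (hC : Convex ℝ C)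
    (hCU : C ⊆ U) {B : ℝ} (hB₀ : 0 ≤ B)
    (hB : ∀ x ∈ C, ∀ s, fderiv ℝ χ s ≠ 0 → ‖g (ofReIm (x, s))‖ ≤ B)
    {x y : Fin n → ℝ} (hx : x ∈ C) (hy : y ∈ C) :
    ‖(∫ s, χ s • g (ofReIm (y, s))) - ∫ s, χ s • g (ofReIm (x, s))‖ ≤
      (∫ s, ‖fderiv ℝ χ s‖) * B * ‖y - x‖ := by
  have hint : Integrable fun s => ‖fderiv ℝ χ s‖ :=
    ((hχ.continuous_fderiv one_ne_zero).integrable_of_hasCompactSupport (hχc.fderiv ℝ)).norm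
  refine hC.norm_image_sub_le_of_norm_hasFDerivWithin_le (fun x hx =>
    (hasFDerivAt_integral_slice hU hg hχ.continuous hχc (hCU hx)).hasFDerivWithinAt)
    (fun x hx => ContinuousLinearMap.opNorm_le_bound _ (by positivity) fun v => ?_) hx hy
  have hpointwise : ∀ s, ‖fderiv ℝ χ s v • g (ofReIm (x, s))‖ ≤ ‖fderiv ℝ χ s‖ * (B * ‖v‖) := by
    intro s
    by_cases hs : fderiv ℝ χ s = 0
    · simp [hs]
    · rw [norm_smul, mul_comm B, ← mul_assoc]
      gcongr
      exacts [(fderiv ℝ χ s).le_opNorm v, hB x hx s hs]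
  have hD : Continuous fun s =>
      ((fderiv ℂ g (ofReIm (x, s))).restrictScalars ℝ ∘L ofReIm) ∘L .inl ℝ _ (Fin n → ℝ) :=
    ((ContinuousLinearMap.restrictScalarsL ℂ _ V ℝ ℝ).continuous.comp
      (continuous_slice (continuousOn_fderiv (isOpen_tube hU) hg) (hCU hx))).clm_comp
        continuous_const |>.clm_comp continuous_const
  rw [ContinuousLinearMap.integral_apply
    (integrable_smul_of_hasCompactSupport hχ.continuous hχc hD)]
  calc ‖∫ s, (χ s • (((fderiv ℂ g (ofReIm (x, s))).restrictScalars ℝ ∘L ofReIm) ∘L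
        .inl ℝ _ _)) v‖
      = ‖∫ s, fderiv ℝ χ s v • g (ofReIm (x, s))‖ := by
        have := integral_smul_fderiv_slice hU hg hχ hχc (hCU hx) v
        simpa [norm_smul] using congrArg norm this
    _ ≤ ∫ s, ‖fderiv ℝ χ s‖ * (B * ‖v‖) :=
        norm_integral_le_of_norm_le (hint.mul_const _) (.of_forall hpointwise)
    _ = (∫ s, ‖fderiv ℝ χ s‖) * B * ‖v‖ := by rw [integral_mul_const, mul_assoc]

end Slices

section GaussianKernel

variable {n : ℕ}

/-- The Gaussian density `exp (-π |u|²)` on `ℝⁿ`, of total mass one. -/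
noncomputable def gaussDensity (u : Fin n → ℝ) : ℝ := Real.exp (-Real.pi * ∑ i, u i ^ 2)

/-- The entire function on `ℂⁿ` that restricts on `iℝⁿ` to the Gaussian density of width `σ`. -/
noncomputable def gaussKernel (σ : ℝ) (w : Fin n → ℂ) : ℂ :=
  ((σ ^ n)⁻¹ : ℝ) * Complex.exp (Real.pi * (∑ i, w i ^ 2) / σ ^ 2)

lemma gaussDensity_eq_prod (u : Fin n → ℝ) :
    gaussDensity u = ∏ i, Real.exp (-Real.pi * u i ^ 2) := by
  rw [gaussDensity, Finset.mul_sum, Real.exp_sum]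

lemma integrable_gaussDensity : Integrable (gaussDensity : (Fin n → ℝ) → ℝ) := by
  rw [funext gaussDensity_eq_prod]
  exact .fintype_prod (f := fun _ x => Real.exp (-Real.pi * x ^ 2))
    fun _ => integrable_exp_neg_mul_sq Real.pi_pos

lemma integral_gaussDensity : ∫ u : Fin n → ℝ, gaussDensity u = 1 := by
  simp only [gaussDensity_eq_prod]
  rw [integral_fintype_prod_volume_eq_pow (fun x : ℝ => Real.exp (-Real.pi * x ^ 2)),
    integral_gaussian, div_self Real.pi_ne_zero, Real.sqrt_one, one_pow]

lemma differentiable_gaussKernel (σ : ℝ) :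
    Differentiable ℂ (gaussKernel σ : (Fin n → ℂ) → ℂ) := by
  unfold gaussKernel
  fun_prop

lemma gaussKernel_neg (σ : ℝ) (w : Fin n → ℂ) : gaussKernel σ (-w) = gaussKernel σ w := by
  simp [gaussKernel]

lemma gaussKernel_ofReIm {σ : ℝ} (hσ : σ ≠ 0) (u : Fin n → ℝ) :
    gaussKernel σ (ofReIm (0, σ • u)) = ((σ ^ n)⁻¹ * gaussDensity u : ℝ) := by
  have hσ' : (σ : ℂ) ≠ 0 := mod_cast hσ
  have hsum : ∑ i, ofReIm (0, σ • u) i ^ 2 = -σ ^ 2 * ∑ i, (u i : ℂ) ^ 2 := by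
    simp [mul_pow, ← Finset.mul_sum]
  rw [gaussKernel, gaussDensity, hsum]
  push_cast
  congr 2
  field_simp

lemma norm_sq_le_sum_sq (x : Fin n → ℝ) : ‖x‖ ^ 2 ≤ ∑ i, x i ^ 2 := by
  have hle : ‖x‖ ≤ √(∑ i, x i ^ 2) :=
    (pi_norm_le_iff_of_nonneg (Real.sqrt_nonneg _)).2 fun i => Real.abs_le_sqrt
      (Finset.single_le_sum (fun j _ => sq_nonneg (x j)) (Finset.mem_univ i))
  exact (Real.le_sqrt (norm_nonneg x) (by positivity)).1 hle

lemma sum_sq_le_card_mul_norm_sq (x : Fin n → ℝ) : ∑ i, x i ^ 2 ≤ n * ‖x‖ ^ 2 := by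
  calc ∑ i, x i ^ 2 ≤ ∑ _i : Fin n, ‖x‖ ^ 2 := Finset.sum_le_sum fun i _ =>
        sq_le_sq' (neg_le_of_abs_le (norm_le_pi_norm x i)) (le_of_abs_le (norm_le_pi_norm x i))
    _ = n * ‖x‖ ^ 2 := by simp

lemma re_sum_sq_le (w : Fin n → ℂ) :
    (∑ i, w i ^ 2).re ≤ n * ‖rePart w‖ ^ 2 - ‖imPart w‖ ^ 2 := by
  calc (∑ i, w i ^ 2).re = ∑ i, rePart w i ^ 2 - ∑ i, imPart w i ^ 2 := by
        simp [Complex.re_sum, pow_two]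
    _ ≤ n * ‖rePart w‖ ^ 2 - ‖imPart w‖ ^ 2 :=
        sub_le_sub (sum_sq_le_card_mul_norm_sq _) (norm_sq_le_sum_sq _)

lemma norm_gaussKernel_le {σ : ℝ} (hσ : σ ∈ Ioo 0 1) {w : Fin n → ℂ}
    (hw : n * ‖rePart w‖ ^ 2 + 1 ≤ ‖imPart w‖ ^ 2) :
    ‖gaussKernel σ w‖ ≤ σ⁻¹ ^ n * Real.exp (-σ⁻¹) := by
  obtain ⟨hσ₀, hσ₁⟩ := hσ
  have hre : (∑ i, w i ^ 2).re ≤ -1 := (re_sum_sq_le w).trans (by linarith)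
  have hinv : 1 ≤ σ⁻¹ := (one_le_inv₀ hσ₀).2 hσ₁.le
  have hexp : (Real.pi * (∑ i, w i ^ 2) / (σ : ℂ) ^ 2).re ≤ -σ⁻¹ := by
    calc (Real.pi * (∑ i, w i ^ 2) / (σ : ℂ) ^ 2).re
        = Real.pi * (∑ i, w i ^ 2).re * σ⁻¹ ^ 2 := by
          rw [← Complex.ofReal_pow, Complex.div_ofReal_re, Complex.re_ofReal_mul, inv_pow,
            div_eq_mul_inv]
      _ ≤ 1 * (-1) * σ⁻¹ ^ 2 := by
          gcongr ?_ * _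
          nlinarith [Real.pi_gt_three]
      _ ≤ -σ⁻¹ := by nlinarith
  rw [gaussKernel, norm_mul, Complex.norm_exp, Complex.norm_real,
    Real.norm_of_nonneg (by positivity), inv_pow]
  gcongr

lemma norm_gaussKernel_sub_ofReIm_le {σ : ℝ} (hσ : σ ∈ Ioo 0 1) {r ρ : ℝ} {z : Fin n → ℂ}
    (hz : ‖z‖ ≤ r) {x s : Fin n → ℝ} (hx : ‖x‖ ≤ ρ) (hs : r + (n * (r + ρ) ^ 2 + 1) ≤ ‖s‖) :
    ‖gaussKernel σ (z - ofReIm (x, s))‖ ≤ σ⁻¹ ^ n * Real.exp (-σ⁻¹) := by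
  refine norm_gaussKernel_le hσ ?_
  rw [map_sub, map_sub, rePart_ofReIm, imPart_ofReIm]
  have hre : ‖rePart z - x‖ ≤ r + ρ := norm_sub_le_of_le ((norm_rePart_le z).trans hz) hx
  have him : n * (r + ρ) ^ 2 + 1 ≤ ‖imPart z - s‖ := by
    linarith [norm_sub_norm_le s (imPart z), norm_sub_rev s (imPart z), norm_imPart_le z]
  calc n * ‖rePart z - x‖ ^ 2 + 1 ≤ n * (r + ρ) ^ 2 + 1 := by gcongr
    _ ≤ (n * (r + ρ) ^ 2 + 1) ^ 2 :=
        le_self_pow₀ (le_add_of_nonneg_left (by positivity)) two_ne_zero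
    _ ≤ ‖imPart z - s‖ ^ 2 := by gcongr

lemma tendsto_inv_pow_mul_exp_neg_inv (n : ℕ) :
    Tendsto (fun σ : ℝ => σ⁻¹ ^ n * Real.exp (-σ⁻¹)) (𝓝[>] 0) (𝓝 0) :=
  (Real.tendsto_pow_mul_exp_neg_atTop_nhds_zero n).comp tendsto_inv_nhdsGT_zero

end GaussianKernel

section ApproximateIdentity

lemma eventually_forall_norm_integral_smul_sub_lt {X E V : Type*} [TopologicalSpace X]
    [CompactSpace X] [FirstCountableTopology X] [NormedAddCommGroup E] [NormedSpace ℝ E]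
    [MeasurableSpace E] [OpensMeasurableSpace E] [SecondCountableTopology E]
    [NormedAddCommGroup V] [NormedSpace ℝ V] [CompleteSpace V] {μ : Measure E} {γ : E → ℝ}
    (hγ : Integrable γ μ) (hγ' : ∫ u, γ u ∂μ = 1) {h : X → E → V}
    (hh : Continuous fun p : X × E => h p.1 p.2) {B : ℝ} (hB : ∀ x u, ‖h x u‖ ≤ B)
    {ε : ℝ} (hε : 0 < ε) :
    ∀ᶠ σ : ℝ in 𝓝 0, ∀ x, ‖(∫ u, γ u • h x (σ • u) ∂μ) - h x 0‖ < ε := by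
  have hcont : Continuous fun p : ℝ × X => ∫ u, γ u • h p.2 (p.1 • u) ∂μ := by
    refine continuous_of_dominated (bound := fun u => ‖γ u‖ * B)
      (fun p => hγ.aestronglyMeasurable.smul (hh.comp
        (by fun_prop : Continuous fun u => (p.2, p.1 • u))).aestronglyMeasurable)
      (fun p => .of_forall fun u => ?_) (hγ.norm.mul_const B) (.of_forall fun u => ?_)
    · rw [norm_smul]
      exact mul_le_mul_of_nonneg_left (hB _ _) (norm_nonneg _)
    · exact (hh.comp (by fun_prop : Continuous fun p : ℝ × X => (p.2, p.1 • u))).const_smul _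
  have hdiff : Continuous fun p : ℝ × X => ‖(∫ u, γ u • h p.2 (p.1 • u) ∂μ) - h p.2 0‖ :=
    (hcont.sub (hh.comp (by fun_prop : Continuous fun p : ℝ × X => (p.2, (0 : E))))).norm
  have hall := isCompact_univ.eventually_forall_of_forall_eventually (x₀ := (0 : ℝ))
    (P := fun σ x => ‖(∫ u, γ u • h x (σ • u) ∂μ) - h x 0‖ < ε) fun x _ =>
      hdiff.continuousAt.eventually_lt_const (by simpa [integral_smul_const, hγ'] using hε)
  exact hall.mono fun σ hσ x => hσ x (mem_univ x)

end ApproximateIdentity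

section Cutoff

variable {E : Type*} [NormedAddCommGroup E] [NormedSpace ℝ E]

/-- A `C¹` cutoff function with compact support that is one on the closed ball of radius `R`. -/
structure IsCutoff (R : ℝ) (χ : E → ℝ) : Prop where
  contDiff : ContDiff ℝ 1 χ
  hasCompactSupport : HasCompactSupport χ
  eq_one : ∀ s, ‖s‖ ≤ R → χ s = 1

lemma exists_isCutoff [FiniteDimensional ℝ E] (R : ℝ) : ∃ χ : E → ℝ, IsCutoff R χ := by
  let b : ContDiffBump (0 : E) := ⟨|R| + 1, |R| + 2, by positivity, by linarith⟩
  refine ⟨b, b.contDiff, b.hasCompactSupport, fun s hs => b.one_of_mem_closedBall ?_⟩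
  rw [mem_closedBall_zero_iff]
  exact hs.trans ((le_abs_self R).trans (le_add_of_nonneg_right zero_le_one))

lemma IsCutoff.le_norm_of_fderiv_ne_zero {R : ℝ} {χ : E → ℝ} (hχ : IsCutoff R χ) {s : E}
    (hs : fderiv ℝ χ s ≠ 0) : R ≤ ‖s‖ := by
  by_contra! h
  have hone : χ =ᶠ[𝓝 s] fun _ => 1 :=
    (continuous_norm.continuousAt.eventually_lt_const h).mono fun t ht => hχ.eq_one t ht.le
  exact hs (by rw [hone.fderiv_eq, fderiv_const_apply])

end Cutoff

section SliceAverages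

variable {n : ℕ} {V : Type*} [NormedAddCommGroup V] [NormedSpace ℂ V] {U : Set (Fin n → ℝ)}
  {χ : (Fin n → ℝ) → ℝ} {f : (Fin n → ℂ) → V}

/-- The convolution of the Gaussian kernel of width `σ` with the restriction of `f` to the slice
`x + iℝⁿ`, truncated by `χ`. -/
noncomputable def sliceConv (χ : (Fin n → ℝ) → ℝ) (f : (Fin n → ℂ) → V) (σ : ℝ) (x : Fin n → ℝ)
    (z : Fin n → ℂ) : V :=
  ∫ s, χ s • (gaussKernel σ (z - ofReIm (x, s)) • f (ofReIm (x, s)))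

lemma differentiable_sliceConv (hf : ContinuousOn f (Tube U)) (hχ : Continuous χ)
    (hχc : HasCompactSupport χ) (σ : ℝ) {x : Fin n → ℝ} (hx : x ∈ U) :
    Differentiable ℂ (sliceConv χ f σ x) :=
  differentiable_integral_smul_comp_sub hχ hχc (differentiable_gaussKernel σ)
    (by fun_prop) (continuous_slice hf hx)

lemma sliceConv_rePart_eq {σ : ℝ} (hσ : 0 < σ) (z : Fin n → ℂ) :
    sliceConv χ f σ (rePart z) z = ∫ u, gaussDensity u •
      (χ (imPart z + σ • u) • f (ofReIm (rePart z, imPart z + σ • u))) := by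
  set g : (Fin n → ℝ) → V := fun s =>
    χ s • (gaussKernel σ (z - ofReIm (rePart z, s)) • f (ofReIm (rePart z, s)))
  have hchange : ∫ s, g s = σ ^ n • ∫ u, g (imPart z + σ • u) := by
    rw [Measure.integral_comp_smul_of_nonneg volume (fun s => g (imPart z + s)) σ (hR := hσ.le),
      Module.finrank_fin_fun, smul_inv_smul₀ (by positivity), integral_add_left_eq_self g]
  have hkernel : ∀ u, gaussKernel σ (z - ofReIm (rePart z, imPart z + σ • u)) =
      ((σ ^ n)⁻¹ * gaussDensity u : ℝ) := fun u => by
    have hsub : z - ofReIm (rePart z, imPart z + σ • u) = -ofReIm (0, σ • u) := by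
      conv_lhs => rw [← ofReIm_rePart_imPart z, ← map_sub]
      rw [← map_neg]
      simp
    rw [hsub, gaussKernel_neg, gaussKernel_ofReIm hσ.ne']
  rw [sliceConv, hchange, ← integral_smul]
  refine integral_congr_ae (.of_forall fun u => ?_)
  simp only [g, hkernel, Complex.coe_smul, smul_smul]
  congr 1
  field_simp

lemma eventually_norm_sliceConv_rePart_sub_lt [CompleteSpace V] (hf : ContinuousOn f (Tube U))
    (hχ : Continuous χ) (hχc : HasCompactSupport χ) {K : Set (Fin n → ℂ)} (hK : IsCompact K)
    (hKU : K ⊆ Tube U) (hχK : ∀ z ∈ K, χ (imPart z) = 1) {ε : ℝ} (hε : 0 < ε) :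
    ∀ᶠ σ in 𝓝[>] 0, ∀ z ∈ K, ‖sliceConv χ f σ (rePart z) z - f z‖ < ε := by
  have : CompactSpace K := isCompact_iff_compactSpace.1 hK
  obtain ⟨B, hB⟩ := ((hK.image rePart.continuous).prod hχc).exists_bound_of_continuousOn
    (f := fun p : (Fin n → ℝ) × (Fin n → ℝ) => χ p.2 • f (ofReIm (p.1, p.2)))
    ((hχ.comp continuous_snd).continuousOn.smul ((continuousOn_slices hf).mono
      (prod_mono (image_subset_iff.2 hKU) (subset_univ _))))
  let h : K → (Fin n → ℝ) → V := fun z u =>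
    χ (imPart z.1 + u) • f (ofReIm (rePart z.1, imPart z.1 + u))
  have hcont : Continuous fun p : K × (Fin n → ℝ) => h p.1 p.2 :=
    (hχ.comp (by fun_prop)).smul
      (hf.comp_continuous (by fun_prop) fun p => ofReIm_mem_tube (hKU p.1.2) _)
  have hbound : ∀ z u, ‖h z u‖ ≤ max B 0 := by
    intro z u
    by_cases hu : imPart z.1 + u ∈ tsupport χ
    · exact (hB (rePart z.1, _) ⟨mem_image_of_mem _ z.2, hu⟩).trans (le_max_left B 0)
    · simp [h, image_eq_zero_of_notMem_tsupport hu]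
  filter_upwards [nhdsWithin_le_nhds (eventually_forall_norm_integral_smul_sub_lt
    integrable_gaussDensity integral_gaussDensity hcont hbound hε), self_mem_nhdsWithin]
    with σ hσ hσ₀ z hz
  rw [sliceConv_rePart_eq hσ₀]
  simpa [h, hχK z hz] using hσ ⟨z, hz⟩

end SliceAverages

section SlicesAgree

variable {n : ℕ} {V : Type*} [NormedAddCommGroup V] [NormedSpace ℂ V] {U : Set (Fin n → ℝ)}
  {f : (Fin n → ℂ) → V} {S T : Set (Fin n → ℝ)}

/-- The Gaussian convolutions of `f` along the slices over the points of `S`, truncated far enough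
out, become arbitrarily close to each other as the width tends to zero, uniformly in the slices and
locally uniformly in `z`. The bound `R` on the truncation may depend on the bound `r` on `z`. -/
def SlicesAgree (f : (Fin n → ℂ) → V) (S : Set (Fin n → ℝ)) : Prop :=
  ∀ r : ℝ, ∀ᶠ R : ℝ in atTop, ∀ χ : (Fin n → ℝ) → ℝ, IsCutoff R χ → ∀ ε > 0,
    ∀ᶠ σ in 𝓝[>] 0, ∀ z, ‖z‖ ≤ r → ∀ x ∈ S, ∀ y ∈ S,
      dist (sliceConv χ f σ x z) (sliceConv χ f σ y z) ≤ ε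

lemma SlicesAgree.mono (h : SlicesAgree f T) (hST : S ⊆ T) : SlicesAgree f S := fun r =>
  (h r).mono fun _ hR χ hχ ε hε => (hR χ hχ ε hε).mono fun _ hσ z hz x hx y hy =>
    hσ z hz x (hST hx) y (hST hy)

lemma SlicesAgree.union (hS : SlicesAgree f S) (hT : SlicesAgree f T) {a : Fin n → ℝ}
    (haS : a ∈ S) (haT : a ∈ T) : SlicesAgree f (S ∪ T) := by
  intro r
  filter_upwards [hS r, hT r] with R hSR hTR χ hχ ε hε
  filter_upwards [hSR χ hχ (ε / 2) (half_pos hε), hTR χ hχ (ε / 2) (half_pos hε)]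
    with σ hSσ hTσ z hz x hx y hy
  have hcenter : ∀ x ∈ S ∪ T, dist (sliceConv χ f σ x z) (sliceConv χ f σ a z) ≤ ε / 2 :=
    fun x hx => hx.elim (fun hx => hSσ z hz x hx a haS) fun hx => hTσ z hz x hx a haT
  exact (dist_triangle_right _ _ _).trans
    ((add_le_add (hcenter x hx) (hcenter y hy)).trans_eq (add_halves ε))

variable [CompleteSpace V]

lemma dist_sliceConv_le (hU : IsOpen U) (hf : DifferentiableOn ℂ f (Tube U)) (hSc : Convex ℝ S)
    (hSU : S ⊆ U) {ρ r R B : ℝ} (hρ : ∀ x ∈ S, ‖x‖ ≤ ρ) (hR : r + (n * (r + ρ) ^ 2 + 1) ≤ R)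
    {χ : (Fin n → ℝ) → ℝ} (hχ : IsCutoff R χ) (hB₀ : 0 ≤ B)
    (hB : ∀ x ∈ S, ∀ s ∈ tsupport χ, ‖f (ofReIm (x, s))‖ ≤ B) {σ : ℝ} (hσ : σ ∈ Ioo 0 1)
    {z : Fin n → ℂ} (hz : ‖z‖ ≤ r) {x y : Fin n → ℝ} (hx : x ∈ S) (hy : y ∈ S) :
    dist (sliceConv χ f σ x z) (sliceConv χ f σ y z) ≤
      (∫ s, ‖fderiv ℝ χ s‖) * (σ⁻¹ ^ n * Real.exp (-σ⁻¹) * B) * dist x y := by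
  have hσ₀ : 0 ≤ σ⁻¹ := inv_nonneg.2 hσ.1.le
  have hg : DifferentiableOn ℂ (fun w => gaussKernel σ (z - w) • f w) (Tube U) :=
    ((differentiable_gaussKernel σ).comp (by fun_prop)).differentiableOn.smul hf
  have hbound : ∀ x ∈ S, ∀ s, fderiv ℝ χ s ≠ 0 →
      ‖gaussKernel σ (z - ofReIm (x, s)) • f (ofReIm (x, s))‖ ≤
        σ⁻¹ ^ n * Real.exp (-σ⁻¹) * B := fun x hx s hs => by
    rw [norm_smul]
    exact mul_le_mul (norm_gaussKernel_sub_ofReIm_le hσ hz (hρ x hx)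
      (hR.trans (hχ.le_norm_of_fderiv_ne_zero hs)))
      (hB x hx s (support_fderiv_subset ℝ hs)) (norm_nonneg _) (by positivity)
  rw [dist_eq_norm, dist_eq_norm]
  exact norm_integral_slice_sub_le hU hg hχ.contDiff hχ.hasCompactSupport hSc hSU
    (by positivity) hbound hy hx

lemma slicesAgree_of_convex (hU : IsOpen U) (hf : DifferentiableOn ℂ f (Tube U)) (hS : IsCompact S)
    (hSc : Convex ℝ S) (hSU : S ⊆ U) : SlicesAgree f S := by
  intro r
  obtain ⟨ρ, hρ⟩ := hS.isBounded.exists_norm_le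
  filter_upwards [eventually_ge_atTop (r + (n * (r + ρ) ^ 2 + 1))] with R hR χ hχ ε hε
  obtain ⟨B, hB⟩ := (hS.prod hχ.hasCompactSupport).exists_bound_of_continuousOn
    ((continuousOn_slices hf.continuousOn).mono (prod_mono hSU (subset_univ _)))
  have hsmall : ∀ᶠ σ in 𝓝[>] (0 : ℝ),
      (∫ s, ‖fderiv ℝ χ s‖) * (σ⁻¹ ^ n * Real.exp (-σ⁻¹) * max B 0) * diam S < ε := by
    refine Tendsto.eventually_lt_const hε ?_
    simpa only [zero_mul, mul_zero] using
      (((tendsto_inv_pow_mul_exp_neg_inv n).mul_const (max B 0)).const_mul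
        (∫ s, ‖fderiv ℝ χ s‖)).mul_const (diam S)
  filter_upwards [hsmall, Ioo_mem_nhdsGT one_pos] with σ hσε hσ z hz x hx y hy
  have hσ₀ : 0 ≤ σ⁻¹ := inv_nonneg.2 hσ.1.le
  calc dist (sliceConv χ f σ x z) (sliceConv χ f σ y z)
      ≤ (∫ s, ‖fderiv ℝ χ s‖) * (σ⁻¹ ^ n * Real.exp (-σ⁻¹) * max B 0) * dist x y :=
        dist_sliceConv_le hU hf hSc hSU hρ hR hχ (le_max_right B 0)
          (fun x hx s hs => (hB (x, s) ⟨hx, hs⟩).trans (le_max_left B 0)) hσ hz hx hy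
    _ ≤ (∫ s, ‖fderiv ℝ χ s‖) * (σ⁻¹ ^ n * Real.exp (-σ⁻¹) * max B 0) * diam S := by
        gcongr
        exact dist_le_diam_of_mem hS.isBounded hx hy
    _ ≤ ε := hσε.le

lemma exists_mem_nhds_slicesAgree (hU : IsOpen U) (hf : DifferentiableOn ℂ f (Tube U))
    {x : Fin n → ℝ} (hx : x ∈ U) : ∃ N ∈ 𝓝 x, SlicesAgree f N :=
  let ⟨δ, hδ, hsub⟩ := nhds_basis_closedBall.mem_iff.1 (hU.mem_nhds hx)
  ⟨closedBall x δ, closedBall_mem_nhds x hδ,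
    slicesAgree_of_convex hU hf (isCompact_closedBall x δ) (convex_closedBall x δ) hsub⟩

lemma slicesAgree_pair (hU : IsOpen U) (hc : IsPreconnected U)
    (hf : DifferentiableOn ℂ f (Tube U)) {x y : Fin n → ℝ} (hx : x ∈ U) (hy : y ∈ U) :
    SlicesAgree f {x, y} := by
  refine hc.induction₂ (fun x y => SlicesAgree f {x, y}) (fun x hx => ?_)
    (fun x y z _ _ _ hxy hyz => ?_) (fun x y _ _ h => pair_comm x y ▸ h) hx hy
  · obtain ⟨N, hN, hfN⟩ := exists_mem_nhds_slicesAgree hU hf hx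
    filter_upwards [mem_nhdsWithin_of_mem_nhds hN] with y hy
    exact hfN.mono (pair_subset (mem_of_mem_nhds hN) hy)
  · exact (hxy.union hyz (mem_insert_of_mem x rfl) (mem_insert y _)).mono
      (pair_subset (by simp) (by simp))

lemma slicesAgree_insert_of_isCompact (hU : IsOpen U) (hc : IsPreconnected U)
    (hf : DifferentiableOn ℂ f (Tube U)) {a : Fin n → ℝ} (ha : a ∈ U) (hS : IsCompact S)
    (hSU : S ⊆ U) : SlicesAgree f (insert a S) := by
  refine hS.induction_on (p := fun S => SlicesAgree f (insert a S)) ?_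
    (fun _ _ hst h => h.mono (insert_subset_insert hst)) (fun s t hs ht => ?_) fun x hx => ?_
  · exact (slicesAgree_pair hU hc hf ha ha).mono (by simp)
  · rw [insert_union_distrib]
    exact hs.union ht (mem_insert a s) (mem_insert a t)
  · obtain ⟨N, hN, hfN⟩ := exists_mem_nhds_slicesAgree hU hf (hSU hx)
    refine ⟨N, mem_nhdsWithin_of_mem_nhds hN,
      ((slicesAgree_pair hU hc hf ha (hSU hx)).union hfN (a := x) (by simp)
        (mem_of_mem_nhds hN)).mono (insert_subset (by simp) subset_union_right)⟩

theorem exists_differentiable_norm_sub_le_of_isCompact (hU : IsOpen U) (hc : IsPreconnected U)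
    (hf : DifferentiableOn ℂ f (Tube U)) {K : Set (Fin n → ℂ)} (hKU : K ⊆ Tube U)
    (hK : IsCompact K) {ε : ℝ} (hε : 0 < ε) :
    ∃ P : (Fin n → ℂ) → V, Differentiable ℂ P ∧ ∀ z ∈ K, ‖P z - f z‖ ≤ ε := by
  obtain rfl | ⟨a, ha⟩ := U.eq_empty_or_nonempty
  · exact ⟨0, differentiable_const 0, fun z hz => (hKU hz).elim⟩
  obtain ⟨r, hr⟩ := hK.isBounded.exists_norm_le
  obtain ⟨R, hR, hrR⟩ := ((slicesAgree_insert_of_isCompact hU hc hf ha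
    (hK.image rePart.continuous) (image_subset_iff.2 hKU) r).and (eventually_ge_atTop r)).exists
  obtain ⟨χ, hχ⟩ := exists_isCutoff (E := Fin n → ℝ) R
  have hχK : ∀ z ∈ K, χ (imPart z) = 1 := fun z hz =>
    hχ.eq_one _ ((norm_imPart_le z).trans ((hr z hz).trans hrR))
  obtain ⟨σ, hslices, hlimit⟩ := ((hR χ hχ (ε / 2) (half_pos hε)).and
    (eventually_norm_sliceConv_rePart_sub_lt hf.continuousOn hχ.contDiff.continuous
      hχ.hasCompactSupport hK hKU hχK (half_pos hε))).exists
  refine ⟨sliceConv χ f σ a, differentiable_sliceConv hf.continuousOn hχ.contDiff.continuous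
    hχ.hasCompactSupport σ ha, fun z hz => ?_⟩
  have hmove := hslices z (hr z hz) a (mem_insert a _) (rePart z)
    (mem_insert_of_mem a (mem_image_of_mem _ hz))
  rw [dist_eq_norm] at hmove
  calc ‖sliceConv χ f σ a z - f z‖
      ≤ ‖sliceConv χ f σ a z - sliceConv χ f σ (rePart z) z‖ +
        ‖sliceConv χ f σ (rePart z) z - f z‖ := norm_sub_le_norm_sub_add_norm_sub _ _ _
    _ ≤ ε / 2 + ε / 2 := add_le_add hmove (hlimit z hz).le
    _ = ε := add_halves ε

end SlicesAgree

end Bochner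

theorem bochner_tube_theorem_general {V : Type*} [NormedAddCommGroup V] [NormedSpace ℂ V]
    [CompleteSpace V] {n : ℕ} {U : Set (Fin n → ℝ)} (hU : IsOpen U) (hc : IsPreconnected U)
    {f : (Fin n → ℂ) → V} (hf : DifferentiableOn ℂ f (Tube U)) :
    ∃ F : (Fin n → ℂ) → V,
      DifferentiableOn ℂ F (Tube (convexHull ℝ U)) ∧ Set.EqOn F f (Tube U) := by
  have hO : IsOpen (Tube U) := Bochner.isOpen_tube hU
  obtain ⟨P, hP, hPf⟩ := Bochner.exists_seq_tendstoLocallyUniformlyOn hO fun K hKU hK ε hε =>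
    Bochner.exists_differentiable_norm_sub_le_of_isCompact hU hc hf hKU hK hε
  obtain ⟨F, hF, hFf⟩ := Bochner.exists_differentiableOn_compactEntireHull_eqOn hO hP hPf
  exact ⟨F, hF.mono (Bochner.tube_convexHull_subset_compactEntireHull hU hc), hFf⟩

/-- Bochner's tube theorem: a function holomorphic on the tube over a connected open set
`U ⊆ ℝⁿ` extends holomorphically to the tube over the convex hull of `U`. -/
theorem bochner_tube_theorem (n : ℕ) (hn : 1 ≤ n) (U : Set (Fin n → ℝ))
    (hU_open : IsOpen U) (hU_conn : IsConnected U)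
    (f : (Fin n → ℂ) → ℂ) (hf : DifferentiableOn ℂ f (Tube U)) :
    ∃ F : (Fin n → ℂ) → ℂ,
      DifferentiableOn ℂ F (Tube (convexHull ℝ U)) ∧ Set.EqOn F f (Tube U) :=
  bochner_tube_theorem_general hU_open hU_conn.isPreconnected hf
end

section
/- Let w, z be complex numbers with Re(w) > 1/2 and Re(w+z) > 1. Then the double series ∑_{m,k} μ(k)·m^{−w}·k^{−z}, taken over all pairs of odd positive integers (m, k) such that m·k is a perfect square, converges absolutely and equals ζ(2w)·(1−2^{−2w}) / ( ζ(w+z)·(1−2^{−(w+z)}) ), where μ is the Möbius function and ζ the Riemann zeta function. -/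
open Complex

/-!
If `k` is squarefree, then `m * k` is a square exactly when `m = a ^ 2 * k`, and `a` is unique.
Since `μ` vanishes off the squarefree integers, the sum over pairs with `m * k` a square is
therefore a sum over all pairs `(a, k)`, in which `m ^ (-w) * k ^ (-z)` becomes
`a ^ (-2 * w) * k ^ (-(w + z))`. The double series thus factors into two Dirichlet series, the
second of which is the Möbius inverse of an `L`-series. Restricting to integers coprime to `N` is
the same as twisting by the trivial Dirichlet character modulo `N`.
-/

open scoped ArithmeticFunction.Moebius LSeries.notation

lemma isSquare_mul_iff_of_squarefree {R : Type*} [CommMonoidWithZero R] [IsCancelMulZero R]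
    [Nontrivial R] [DecompositionMonoid R] {m k : R} (hk : Squarefree k) :
    IsSquare (m * k) ↔ ∃ a, m = a ^ 2 * k := by
  constructor
  · rintro ⟨c, hc⟩
    have hkc : k ∣ c := (hk.dvd_pow_iff_dvd two_ne_zero).mp ⟨m, by rw [sq, ← hc, mul_comm]⟩
    obtain ⟨a, rfl⟩ := hkc
    refine ⟨a, mul_right_cancel₀ hk.ne_zero (hc.trans ?_)⟩
    rw [sq]
    ac_rfl
  · rintro ⟨a, rfl⟩
    exact ⟨a * k, by rw [sq]; ac_rfl⟩

lemma hasSum_isSquare_mul_iff {M : Type*} [AddCommMonoid M] [TopologicalSpace M]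
    {f : ℕ × ℕ → M} {s : M} (hf : ∀ q, ¬ Squarefree q.2 → f q = 0) :
    HasSum (fun q : {q : ℕ × ℕ // IsSquare (q.1 * q.2)} ↦ f q) s ↔
      HasSum (fun q : ℕ × ℕ ↦ f (q.1 ^ 2 * q.2, q.2)) s := by
  let g : ℕ × ℕ → M := fun q ↦ f (q.1 ^ 2 * q.2, q.2)
  have squarefree_snd (q : Function.support g) : Squarefree q.1.2 := by
    by_contra h
    exact q.2 (hf _ h)
  refine hasSum_iff_hasSum_of_ne_zero_bij (g := g)
    (fun q ↦ ⟨(q.1.1 ^ 2 * q.1.2, q.1.2),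
      (isSquare_mul_iff_of_squarefree (squarefree_snd q)).mpr ⟨_, rfl⟩⟩) ?_ ?_ fun _ ↦ rfl
  · rintro q ⟨⟨b, l⟩, _⟩ h
    have hk := (squarefree_snd q).ne_zero
    obtain ⟨⟨a, k⟩, _⟩ := q
    obtain ⟨hab, rfl⟩ := by simpa only [Subtype.mk.injEq, Prod.mk.injEq] using h
    obtain rfl : a = b := Nat.pow_left_injective two_ne_zero (mul_right_cancel₀ hk hab)
    rfl
  · rintro ⟨⟨m, k⟩, hmk⟩ hfmk
    have hk : Squarefree k := by
      by_contra h
      exact hfmk (hf _ h)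
    obtain ⟨a, rfl⟩ := (isSquare_mul_iff_of_squarefree hk).mp hmk
    exact ⟨⟨(a, k), hfmk⟩, rfl⟩

lemma natCast_sq_mul_cpow_mul_cpow (a : ℕ) {k : ℕ} (hk : k ≠ 0) (w z : ℂ) :
    ((a ^ 2 * k : ℕ) : ℂ) ^ w * (k : ℂ) ^ z = (a : ℂ) ^ (2 * w) * (k : ℂ) ^ (w + z) := by
  have h_sq : (a : ℂ) ^ (2 * w) = ((a ^ 2 : ℕ) : ℂ) ^ w := mod_cast natCast_cpow_natCast_mul a 2 w
  rw [Nat.cast_mul, natCast_mul_natCast_cpow, mul_assoc, h_sq,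
    cpow_add _ _ (Nat.cast_ne_zero.mpr hk)]

section DirichletCharacter

variable {N : ℕ}

lemma hasSum_LSeries_term_mul_moebius_term {f : ℕ → ℂ} (χ : DirichletCharacter ℂ N) {s t : ℂ}
    (hf : LSeriesSummable f s) (ht : 1 < t.re) :
    HasSum (fun q : ℕ × ℕ ↦ LSeries.term f s q.1 * LSeries.term (↗χ * ↗μ) t q.2)
      (L f s / L ↗χ t) := by
  have hχ := χ.LSeriesSummable_mul (ArithmeticFunction.LSeriesSummable_moebius_iff.mpr ht)
  have h_inv : L (↗χ * ↗μ) t = (L ↗χ t)⁻¹ :=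
    eq_inv_of_mul_eq_one_right (DirichletCharacter.LSeries.mul_mu_eq_one χ ht)
  rw [div_eq_mul_inv, ← h_inv]
  exact hf.LSeriesHasSum.mul hχ.LSeriesHasSum (summable_mul_of_summable_norm hf.norm hχ.norm)

/-- Pairs with a zero coordinate contribute nothing, even for `N = 1` where `χ 0 = 1`:
`μ 0 = 0`, and `0 ^ (-w) = 0` since `w ≠ 0`. -/
theorem hasSum_moebius_mul_dirichletCharacter_of_isSquare_mul (χ ψ : DirichletCharacter ℂ N)
    {w z : ℂ} (hw : 1 < (2 * w).re) (hwz : 1 < (w + z).re) :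
    HasSum (fun q : {q : ℕ × ℕ // IsSquare (q.1 * q.2)} ↦
      χ q.1.1 * ψ q.1.2 * (μ q.1.2 * (q.1.1 : ℂ) ^ (-w) * (q.1.2 : ℂ) ^ (-z)))
      (L ↗(χ ^ 2) (2 * w) / L ↗(χ * ψ) (w + z)) := by
  refine (hasSum_isSquare_mul_iff (f := fun q : ℕ × ℕ ↦
    χ q.1 * ψ q.2 * (μ q.2 * (q.1 : ℂ) ^ (-w) * (q.2 : ℂ) ^ (-z))) fun q hq ↦ ?_).mpr ?_
  · simp [ArithmeticFunction.moebius_eq_zero_of_not_squarefree hq]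
  refine (hasSum_LSeries_term_mul_moebius_term (χ * ψ)
    ((χ ^ 2).LSeriesSummable_of_one_lt_re hw) hwz).congr_fun fun ⟨a, k⟩ ↦ ?_
  rcases eq_or_ne k 0 with rfl | hk
  · simp
  have h_cpow := natCast_sq_mul_cpow_mul_cpow a hk (-w) (-z)
  rw [← neg_add, mul_neg] at h_cpow
  have h_char : χ (a ^ 2 * k : ℕ) * ψ k = (χ ^ 2) a * (χ * ψ) k := by
    rw [χ.pow_apply' two_ne_zero, MulChar.mul_apply, Nat.cast_mul, Nat.cast_pow, map_mul, map_pow,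
      mul_assoc]
  rw [LSeries.term_of_ne_zero' (ne_zero_of_one_lt_re hw),
    LSeries.term_of_ne_zero' (ne_zero_of_one_lt_re hwz), div_eq_mul_inv, div_eq_mul_inv, ← cpow_neg,
    ← cpow_neg, Pi.mul_apply, mul_assoc (μ k : ℂ), h_cpow, h_char]
  ring

lemma LSeries_one_dirichletCharacter_eq [NeZero N] {s : ℂ} (hs : 1 < s.re) :
    L ↗(1 : DirichletCharacter ℂ N) s =
      riemannZeta s * ∏ p ∈ N.primeFactors, (1 - (p : ℂ) ^ (-s)) := by
  have hs1 : s ≠ 1 := by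
    rintro rfl
    simp at hs
  rw [← DirichletCharacter.LFunction_eq_LSeries _ hs, mul_comm]
  exact DirichletCharacter.LFunctionTrivChar_eq_mul_riemannZeta hs1

lemma one_dirichletCharacter_natCast (n : ℕ) :
    (1 : DirichletCharacter ℂ N) n = if n.Coprime N then 1 else 0 := by
  split_ifs with h
  · exact MulChar.one_apply ((ZMod.isUnit_iff_coprime n N).mpr h)
  · exact MulChar.map_nonunit _ (mt (ZMod.isUnit_iff_coprime n N).mp h)

end DirichletCharacter

theorem moebius_square_double_series_general (N : ℕ) [NeZero N] {w z : ℂ} (hw : 1 / 2 < w.re)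
    (hwz : 1 < (w + z).re) :
    HasSum (fun q : {q : ℕ × ℕ // q.1.Coprime N ∧ q.2.Coprime N ∧ IsSquare (q.1 * q.2)} ↦
      (μ q.1.2 : ℂ) * (q.1.1 : ℂ) ^ (-w) * (q.1.2 : ℂ) ^ (-z))
      (riemannZeta (2 * w) * (∏ p ∈ N.primeFactors, (1 - (p : ℂ) ^ (-(2 * w)))) /
        (riemannZeta (w + z) * ∏ p ∈ N.primeFactors, (1 - (p : ℂ) ^ (-(w + z))))) := by
  have h2w : 1 < (2 * w).re := by
    simp only [mul_re, re_ofNat, im_ofNat, zero_mul, sub_zero]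
    linarith
  have h := hasSum_moebius_mul_dirichletCharacter_of_isSquare_mul
    (1 : DirichletCharacter ℂ N) 1 h2w hwz
  rw [one_pow, one_mul, LSeries_one_dirichletCharacter_eq h2w,
    LSeries_one_dirichletCharacter_eq hwz] at h
  have forget_injective := Subtype.map_injective (p := fun q : ℕ × ℕ ↦
    q.1.Coprime N ∧ q.2.Coprime N ∧ IsSquare (q.1 * q.2)) (q := fun q ↦ IsSquare (q.1 * q.2))
    (fun _ hq ↦ hq.2.2) Function.injective_id
  refine ((forget_injective.hasSum_iff ?_).mpr h).congr_fun ?_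
  · rintro ⟨⟨m, k⟩, hmk⟩ h_range
    have h_coprime : ¬ (m.Coprime N ∧ k.Coprime N) :=
      fun ⟨hm, hk⟩ ↦ h_range ⟨⟨(m, k), hm, hk, hmk⟩, rfl⟩
    rw [one_dirichletCharacter_natCast, one_dirichletCharacter_natCast, ite_zero_mul_ite_zero,
      if_neg h_coprime, zero_mul]
  · rintro ⟨⟨m, k⟩, hm, hk, -⟩
    simp [one_dirichletCharacter_natCast, if_pos hm, if_pos hk]

/-- The double series `∑ μ(k) m^{-w} k^{-z}` over pairs of odd positive integers `(m, k)` with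
`m·k` a perfect square converges absolutely and equals `ζ^{(2)}(2w)/ζ^{(2)}(w+z)`. -/
theorem moebius_square_double_series (w z : ℂ) (hw : 1 / 2 < w.re) (hwz : 1 < (w + z).re) :
    Summable (fun p : {q : ℕ × ℕ // Odd q.1 ∧ Odd q.2 ∧ IsSquare (q.1 * q.2)} =>
      ((ArithmeticFunction.moebius p.val.2 : ℤ) : ℂ)
        * (p.val.1 : ℂ) ^ (-w) * (p.val.2 : ℂ) ^ (-z)) ∧
    (∑' p : {q : ℕ × ℕ // Odd q.1 ∧ Odd q.2 ∧ IsSquare (q.1 * q.2)},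
      ((ArithmeticFunction.moebius p.val.2 : ℤ) : ℂ)
        * (p.val.1 : ℂ) ^ (-w) * (p.val.2 : ℂ) ^ (-z))
      = riemannZeta (2 * w) * (1 - (2 : ℂ) ^ (-(2 * w)))
        / (riemannZeta (w + z) * (1 - (2 : ℂ) ^ (-(w + z)))) := by
  have h := moebius_square_double_series_general 2 hw hwz
  simp only [Nat.prime_two.primeFactors, Finset.prod_singleton, Nat.cast_ofNat] at h
  let odd_equiv_coprime : {q : ℕ × ℕ // Odd q.1 ∧ Odd q.2 ∧ IsSquare (q.1 * q.2)} ≃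
      {q : ℕ × ℕ // q.1.Coprime 2 ∧ q.2.Coprime 2 ∧ IsSquare (q.1 * q.2)} :=
    Equiv.subtypeEquivRight fun q ↦ by simp only [Nat.coprime_two_right]
  have h_odd := odd_equiv_coprime.hasSum_iff.mpr h
  exact ⟨h_odd.summable, h_odd.tsum_eq⟩
end
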